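/- Let N ⊆ E be a locally closed subset and suppose p ∈ N is locally rigid with respect to N. Then for every smooth compactly supported function H : E → ℝ with H ≡ 0 on N, there exists ε > 0 such that φ_H^t(p) ∈ N for all t ∈ [0, ε]. (Local rigidity forces invariance under Hamiltonian flows of functions vanishing on N.) -/

import Mathlib

/-!
Let `W` be an open set in which `p` is rigid with respect to `N ∩ W`. Cutting `H` off near `p`
gives a smooth function `K` with compact support in `W`, which still vanishes on `N` and whose flow
`φ` agrees with that of `H` along the orbit of `p` for a short time `[0, ε]`. Suppose
`φ T p ∉ N` for some `T` in this interval. Since `N ∩ W` is closed in `W`, some ball `U` around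
`p` satisfies `φ T (closure U) ∩ N = ∅`.

The Hamiltonians `δ sin(K/δ)` are `C⁰`-small as `δ → 0`. As `K` is constant along its own flow,
their time-`T` maps are `z ↦ φ (T cos(K z/δ)) z` (`exists_squeezed`). Such a map equals `φ T`
on `{K = 0}` and preserves every level set of `K`; as `N ⊆ {K = 0}`, it moves
`closure U ∩ {K = 0}` off `N` by the choice of `U`, and points with `K ≠ 0` stay off `N`. The ball
`U` does not depend on `δ`, so its displacement energy from `N ∩ W` in `W` is zero, contradicting
rigidity.
-/

open scoped ENNReal Topology

noncomputable section

/-- The standard symplectic vector space `E = ℝⁿ × ℝⁿ`. -/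
abbrev E (n : ℕ) := (Fin n → ℝ) × (Fin n → ℝ)

/-- The standard symplectic form `ω₀((x,y),(x',y')) = ⟨x,y'⟩ − ⟨y,x'⟩`. -/
def omega0 (n : ℕ) (z w : E n) : ℝ :=
  (∑ i, z.1 i * w.2 i) - ∑ i, z.2 i * w.1 i

/-- The Hamiltonian vector field `X_{H_t}(x,y) = (∂_y H(t,x,y), −∂_x H(t,x,y))`. -/
def XH (n : ℕ) (H : ℝ × E n → ℝ) (t : ℝ) (z : E n) : E n :=
  ((fun i => fderiv ℝ (fun w => H (t, w)) z (0, Pi.single i 1)),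
   (fun i => -fderiv ℝ (fun w => H (t, w)) z (Pi.single i 1, 0)))

/-- `Φ` is the Hamiltonian flow of `H`: `Φ 0 = id` and `(d/dt) Φ t z = X_{H_t} (Φ t z)`. -/
def IsHamFlow (n : ℕ) (H : ℝ × E n → ℝ) (Φ : ℝ → E n → E n) : Prop :=
  (∀ z, Φ 0 z = z) ∧ ∀ z t, HasDerivAt (fun s => Φ s z) (XH n H t (Φ t z)) t

/-- `H : ℝ × E → ℝ` is smooth with support a compact subset of `[0,1] × W`. -/
def AdmissibleH (n : ℕ) (W : Set (E n)) (H : ℝ × E n → ℝ) : Prop :=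
  ContDiff ℝ (⊤ : ℕ∞) H ∧ IsCompact (tsupport H) ∧
    tsupport H ⊆ Set.Icc (0 : ℝ) 1 ×ˢ W

/-- `Ham(W)`: time-one maps of Hamiltonian flows of admissible Hamiltonians. -/
def HamGrp (n : ℕ) (W : Set (E n)) : Set (E n → E n) :=
  {φ | ∃ H Φ, AdmissibleH n W H ∧ IsHamFlow n H Φ ∧ φ = Φ 1}

/-- `‖H‖ = ∫₀¹ (sup H(t,·) − inf H(t,·)) dt`. -/
def HNorm (n : ℕ) (H : ℝ × E n → ℝ) : ℝ :=
  ∫ t in (0:ℝ)..(1:ℝ),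
    (sSup (Set.range fun z => H (t, z)) - sInf (Set.range fun z => H (t, z)))

/-- The Hofer norm `‖φ‖_W` of `φ ∈ Ham(W)`. -/
def hoferNorm (n : ℕ) (W : Set (E n)) (φ : E n → E n) : ℝ :=
  sInf {c | ∃ H Φ, AdmissibleH n W H ∧ IsHamFlow n H Φ ∧ φ = Φ 1 ∧ c = HNorm n H}

/-- The displacement energy `e_W(U,N)`, valued in `ℝ≥0∞` (so `inf ∅ = ⊤`).
`closure U ∩ W` is the closure of `U` in `W`. -/
def dispE (n : ℕ) (W U N : Set (E n)) : ℝ≥0∞ :=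
  sInf {c | ∃ φ ∈ HamGrp n W, φ '' (closure U ∩ W) ∩ N = ∅ ∧
    c = ENNReal.ofReal (hoferNorm n W φ)}

/-- `p` is rigid with respect to `N` in `W`. -/
def RigidWrt (n : ℕ) (W N : Set (E n)) (p : E n) : Prop :=
  ∀ U : Set (E n), IsOpen U → p ∈ U → U ⊆ W → 0 < dispE n W U N

/-- `N` is a subset of `W` which is closed as a subset of `W`. -/
def ClosedIn (n : ℕ) (W N : Set (E n)) : Prop :=
  N ⊆ W ∧ closure N ∩ W ⊆ N

/-- `N` is locally closed. -/
def LocallyClosedSet (n : ℕ) (N : Set (E n)) : Prop :=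
  ∀ q ∈ N, ∃ V : Set (E n), IsOpen V ∧ q ∈ V ∧ ClosedIn n V (N ∩ V)

/-- `p` is locally rigid with respect to `N`. -/
def LocRigid (n : ℕ) (N : Set (E n)) (p : E n) : Prop :=
  ∃ W : Set (E n), IsOpen W ∧ p ∈ W ∧ ClosedIn n W (N ∩ W) ∧
    RigidWrt n W (N ∩ W) p

/-- `ψ` is a symplectomorphism from the open set `W` onto its (open) image. -/
def IsSymplecto (n : ℕ) (W : Set (E n)) (ψ : E n → E n) : Prop :=
  IsOpen W ∧ IsOpen (ψ '' W) ∧ Set.InjOn ψ W ∧ ContDiffOn ℝ (⊤ : ℕ∞) ψ W ∧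
  (∃ g : E n → E n, ContDiffOn ℝ (⊤ : ℕ∞) g (ψ '' W) ∧ ∀ z ∈ W, g (ψ z) = z) ∧
  ∀ z ∈ W, ∀ u v, omega0 n (fderiv ℝ ψ z u) (fderiv ℝ ψ z v) = omega0 n u v

/-- `ψ` is a symplectic homeomorphism of `E`: a homeomorphism which is a `C⁰`-limit
(uniformly on compact sets, together with inverses) of symplectomorphisms of `E` onto `E`. -/
def IsSympHomeo (n : ℕ) (ψ : E n ≃ₜ E n) : Prop :=
  ∃ Ψ : ℕ → E n ≃ E n,
    (∀ m, IsSymplecto n Set.univ (Ψ m)) ∧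
    TendstoLocallyUniformly (fun m z => Ψ m z) (fun z => ψ z) Filter.atTop ∧
    TendstoLocallyUniformly (fun m z => (Ψ m).symm z) (fun z => ψ.symm z) Filter.atTop

/-- A fixed `k`-dimensional coordinate subspace `ℝᵏ × {0}` of `E`. -/
def coordSubspace (n k : ℕ) : Set (E n) :=
  {z | (∀ i : Fin n, k ≤ (i : ℕ) → z.1 i = 0) ∧
       (∀ i : Fin n, k ≤ n + (i : ℕ) → z.2 i = 0)}

/-- `N` is a smooth `k`-dimensional submanifold of `E`. -/
def IsSubmanifold (n k : ℕ) (N : Set (E n)) : Prop :=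
  ∀ p ∈ N, ∃ (V : Set (E n)) (Φ : E n → E n),
    IsOpen V ∧ p ∈ V ∧ IsOpen (Φ '' V) ∧ Set.InjOn Φ V ∧
    ContDiffOn ℝ (⊤ : ℕ∞) Φ V ∧
    (∃ g : E n → E n, ContDiffOn ℝ (⊤ : ℕ∞) g (Φ '' V) ∧ ∀ z ∈ V, g (Φ z) = z) ∧
    Φ '' (N ∩ V) = coordSubspace n k ∩ Φ '' V

/-- The tangent space `T_pN`, as velocities of curves through `p` lying locally in `N`. -/
def TangentSet (n : ℕ) (N : Set (E n)) (p : E n) : Set (E n) :=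
  {v | ∃ γ : ℝ → E n, γ 0 = p ∧ (∀ᶠ t in 𝓝 (0:ℝ), γ t ∈ N) ∧ HasDerivAt γ v 0}

/-- The symplectic orthogonal complement `T^{ω₀}`. -/
def symplOrth (n : ℕ) (T : Set (E n)) : Set (E n) :=
  {v | ∀ u ∈ T, omega0 n v u = 0}

/-- `N` is coisotropic: `(T_pN)^{ω₀} ⊆ T_pN` for all `p ∈ N`. -/
def IsCoisotropic (n : ℕ) (N : Set (E n)) : Prop :=
  ∀ p ∈ N, symplOrth n (TangentSet n N p) ⊆ TangentSet n N p

/-- `N` is Lagrangian: `(T_pN)^{ω₀} = T_pN` for all `p ∈ N`. -/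
def IsLagrangian (n : ℕ) (N : Set (E n)) : Prop :=
  ∀ p ∈ N, symplOrth n (TangentSet n N p) = TangentSet n N p

/-- `Σ_N`: Hamiltonian diffeomorphisms preserving `N`. -/
def SigmaGrp (n : ℕ) (N : Set (E n)) : Set (E n → E n) :=
  {φ | φ ∈ HamGrp n Set.univ ∧ φ '' N = N}

/-- `Σ̄_N`: the closure of `Σ_N` in the Hofer metric. -/
def SigmaBar (n : ℕ) (N : Set (E n)) : Set (E n → E n) :=
  {φ | φ ∈ HamGrp n Set.univ ∧ ∀ ε : ℝ, 0 < ε →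
    ∃ ψ ∈ SigmaGrp n N, ∃ χ : E n → E n,
      Function.LeftInverse χ ψ ∧ Function.RightInverse χ ψ ∧
      hoferNorm n Set.univ (χ ∘ φ) < ε}

/-- The rigid locus `R_N = ⋂_{φ ∈ Σ̄_N} φ⁻¹(N)`. -/
def rigidLocus (n : ℕ) (N : Set (E n)) : Set (E n) :=
  ⋂ φ ∈ SigmaBar n N, φ ⁻¹' N

/-! ### Flows of bounded Lipschitz vector fields -/

/-- A bounded Lipschitz autonomous vector field has global integral curves: Picard–Lindelöf
applies on every interval `[-M, M]`, and the solutions agree where they overlap. -/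
lemma exists_global_integralCurve {V : Type*} [NormedAddCommGroup V] [NormedSpace ℝ V]
    [CompleteSpace V] {X : V → V} {K : NNReal} (hX : LipschitzWith K X) {L : NNReal}
    (hL : ∀ z, ‖X z‖ ≤ L) (z : V) :
    ∃ γ : ℝ → V, γ 0 = z ∧ ∀ t, HasDerivAt γ (X (γ t)) t := by
  have hloc : ∀ m : ℕ, ∃ γ : ℝ → V, γ 0 = z ∧
      ∀ t ∈ Set.Ioo (-(m + 1 : ℝ)) (m + 1), HasDerivAt γ (X (γ t)) t := by
    intro m
    have hm : (0 : ℝ) ≤ m + 1 := by positivity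
    have hPL : IsPicardLindelof (fun _ => X)
        (⟨0, by constructor <;> linarith⟩ : Set.Icc (-(m + 1 : ℝ)) (m + 1)) z
        (L * (m + 1)) 0 L K :=
      { lipschitzOnWith := fun _ _ => hX.lipschitzOnWith
        continuousOn := fun _ _ => continuousOn_const
        norm_le := fun _ _ x _ => hL x
        mul_max_le := by simp }
    obtain ⟨γ, h0, hγ⟩ := hPL.exists_eq_forall_mem_Icc_hasDerivWithinAt₀
    exact ⟨γ, h0, fun t ht =>
      (hγ t (Set.Ioo_subset_Icc_self ht)).hasDerivAt (Icc_mem_nhds ht.1 ht.2)⟩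
  choose γ h0 hγ using hloc
  have hagree : ∀ m k : ℕ, m ≤ k →
      Set.EqOn (γ m) (γ k) (Set.Ioo (-(m + 1 : ℝ)) (m + 1)) := by
    intro m k hmk
    have hmk' : (m : ℝ) ≤ k := by exact_mod_cast hmk
    refine ODE_solution_unique_of_mem_Ioo (v := fun _ => X) (s := fun _ => Set.univ) (K := K)
      (t₀ := 0) (fun t _ => hX.lipschitzOnWith)
      ⟨by linarith [m.cast_nonneg (α := ℝ)], by linarith [m.cast_nonneg (α := ℝ)]⟩
      (fun t ht => ⟨hγ m t ht, trivial⟩)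
      (fun t ht => ⟨hγ k t ⟨by linarith [ht.1], by linarith [ht.2]⟩, trivial⟩)
      ((h0 m).trans (h0 k).symm)
  have hmem : ∀ t : ℝ, t ∈ Set.Ioo (-((⌈|t|⌉₊ : ℕ) + 1 : ℝ)) ((⌈|t|⌉₊ : ℕ) + 1) := by
    intro t
    have h1 := Nat.le_ceil |t|
    have h2 := abs_le.1 h1
    exact ⟨by linarith [h2.1], by linarith [h2.2]⟩
  have hglue : ∀ (m : ℕ), ∀ t ∈ Set.Ioo (-(m + 1 : ℝ)) (m + 1), γ ⌈|t|⌉₊ t = γ m t := by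
    intro m t ht
    rcases le_total ⌈|t|⌉₊ m with h | h
    · exact hagree _ _ h (hmem t)
    · exact (hagree _ _ h ht).symm
  refine ⟨fun t => γ ⌈|t|⌉₊ t, h0 _, fun t => ?_⟩
  have h := hγ _ t (hmem t)
  refine h.congr_of_eventuallyEq ?_
  filter_upwards [Ioo_mem_nhds (hmem t).1 (hmem t).2] with s hs
  exact hglue _ s hs

/-- By Grönwall, a family of integral curves of a Lipschitz vector field depends continuously on
the starting point at each fixed nonnegative time. -/
lemma continuous_flow {V : Type*} [NormedAddCommGroup V] [NormedSpace ℝ V]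
    {X : V → V} {K : NNReal} (hX : LipschitzWith K X) {φ : ℝ → V → V} (h0 : ∀ z, φ 0 z = z)
    (hφ : ∀ z t, HasDerivAt (fun s => φ s z) (X (φ t z)) t) {T : ℝ} (hT : 0 ≤ T) :
    Continuous (φ T) := by
  refine (LipschitzWith.of_dist_le_mul (K := (Real.exp (K * T)).toNNReal) fun z w => ?_).continuous
  have := dist_le_of_trajectories_ODE (v := fun _ => X) (K := K) (fun _ => hX)
    (f := fun s => φ s z) (g := fun s => φ s w) (a := 0) (b := T) (δ := dist z w)
    (fun t _ => (hφ z t).continuousAt.continuousWithinAt)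
    (fun t _ => (hφ z t).hasDerivWithinAt)
    (fun t _ => (hφ w t).continuousAt.continuousWithinAt)
    (fun t _ => (hφ w t).hasDerivWithinAt) (by simp [h0]) T ⟨hT, le_rfl⟩
  rw [Real.coe_toNNReal _ (Real.exp_pos _).le, mul_comm]
  simpa using this

/-! ### Autonomous Hamiltonian vector fields -/

/-- The linear map `Λ ↦ (Λ(0, ·), -Λ(·, 0))` turning a differential into the corresponding
Hamiltonian vector. -/
def sharp (n : ℕ) : (E n →L[ℝ] ℝ) →L[ℝ] E n :=
  (ContinuousLinearMap.pi fun i =>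
      ContinuousLinearMap.apply ℝ ℝ ((0, Pi.single i 1) : E n)).prod
    (ContinuousLinearMap.pi fun i =>
      -ContinuousLinearMap.apply ℝ ℝ ((Pi.single i 1, 0) : E n))

lemma XH_eq_sharp (n : ℕ) (H : ℝ × E n → ℝ) (t : ℝ) (z : E n) :
    XH n H t z = sharp n (fderiv ℝ (fun w => H (t, w)) z) := rfl

/-- The symplectic form is alternating: a covector annihilates its own Hamiltonian vector. -/
lemma apply_sharp_self (n : ℕ) (Λ : E n →L[ℝ] ℝ) : Λ (sharp n Λ) = 0 := by
  have key : ∀ w : E n, Λ w =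
      ∑ i, w.1 i * Λ (Pi.single i 1, 0) + ∑ i, w.2 i * Λ (0, Pi.single i 1) := by
    intro w
    have hw : w = ∑ i, w.1 i • ((Pi.single i 1, 0) : E n)
        + ∑ i, w.2 i • ((0, Pi.single i 1) : E n) := by
      ext j <;> simp [Prod.fst_sum, Prod.snd_sum, Finset.sum_apply, Pi.single_apply]
    conv_lhs => rw [hw]
    simp only [map_add, map_sum, map_smul, smul_eq_mul]
  rw [key]
  have h1 : ∀ i, (sharp n Λ).1 i = Λ (0, Pi.single i 1) := fun _ => rfl
  have h2 : ∀ i, (sharp n Λ).2 i = -Λ (Pi.single i 1, 0) := fun _ => rfl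
  simp only [h1, h2]
  rw [← Finset.sum_add_distrib]
  exact Finset.sum_eq_zero fun i _ => by ring

/-- A smooth compactly supported autonomous Hamiltonian `K` has a Lipschitz Hamiltonian vector
field and a global flow, which is continuous in the starting point at nonnegative times and
preserves `K`. -/
lemma exists_autonomous_flow (n : ℕ) {K : E n → ℝ} (hK : ContDiff ℝ (⊤ : ℕ∞) K)
    (hKc : HasCompactSupport K) :
    ∃ C : NNReal, LipschitzWith C (fun z => sharp n (fderiv ℝ K z)) ∧
    ∃ φ : ℝ → E n → E n, (∀ z, φ 0 z = z) ∧
      (∀ z t, HasDerivAt (fun s => φ s z) (sharp n (fderiv ℝ K (φ t z))) t) ∧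
      (∀ T, 0 ≤ T → Continuous (φ T)) ∧ ∀ z t, K (φ t z) = K z := by
  set X : E n → E n := fun z => sharp n (fderiv ℝ K z) with hXdef
  have hXs : ContDiff ℝ (⊤ : ℕ∞) X :=
    (sharp n).contDiff.comp (hK.fderiv_right (m := (⊤ : ℕ∞)) (by simp))
  have hXc : HasCompactSupport X := (hKc.fderiv ℝ).comp_left (map_zero (sharp n))
  obtain ⟨C, hC⟩ := ContDiff.lipschitzWith_of_hasCompactSupport hXc hXs (by simp)
  obtain ⟨L, hL⟩ := hXc.exists_bound_of_continuous hXs.continuous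
  choose γ h0 hγ using fun z => exists_global_integralCurve hC (L := L.toNNReal)
    (fun z => (hL z).trans (Real.le_coe_toNNReal L)) z
  refine ⟨C, hC, fun t z => γ z t, h0, hγ, fun T hT =>
    continuous_flow hC (φ := fun t z => γ z t) h0 hγ hT, fun z t => ?_⟩
  have hder : ∀ s, HasDerivAt (fun s => K (γ z s)) 0 s := by
    intro s
    have hd : HasFDerivAt K (fderiv ℝ K (γ z s)) (γ z s) :=
      (hK.differentiable (by simp) _).hasFDerivAt
    have := hd.comp_hasDerivAt s (hγ z s)
    rwa [hXdef, apply_sharp_self] at this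
  have := is_const_of_deriv_eq_zero (fun s => (hder s).differentiableAt)
    (fun s => (hder s).deriv) t 0
  simpa [h0] using this

/-! ### Bounding the Hofer norm -/

lemma sInf_le_sSup_slice {n : ℕ} {G : ℝ × E n → ℝ} {C : ℝ} (hC : ∀ q, |G q| ≤ C) (t : ℝ) :
    sInf (Set.range fun z => G (t, z)) ≤ sSup (Set.range fun z => G (t, z)) := by
  refine csInf_le_csSup (Set.range_nonempty _) ⟨-C, ?_⟩ ⟨C, ?_⟩
  · rintro _ ⟨z, rfl⟩
    exact (abs_le.1 (hC (t, z))).1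
  · rintro _ ⟨z, rfl⟩
    exact (abs_le.1 (hC (t, z))).2

lemma HNorm_nonneg {n : ℕ} {W : Set (E n)} {G : ℝ × E n → ℝ} (hG : AdmissibleH n W G) :
    0 ≤ HNorm n G := by
  obtain ⟨C, hC⟩ := HasCompactSupport.exists_bound_of_continuous (f := G) hG.2.1
    hG.1.continuous
  exact intervalIntegral.integral_nonneg zero_le_one fun t _ =>
    sub_nonneg.2 (sInf_le_sSup_slice hC t)

lemma HNorm_le {n : ℕ} {G : ℝ × E n → ℝ} {C : ℝ} (hC : ∀ q, |G q| ≤ C) :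
    HNorm n G ≤ 2 * C := by
  have h : ‖HNorm n G‖ ≤ 2 * C * |(1 : ℝ) - 0| := by
    refine intervalIntegral.norm_integral_le_of_norm_le_const fun t _ => ?_
    have h1 : sSup (Set.range fun z => G (t, z)) ≤ C := by
      refine csSup_le (Set.range_nonempty _) ?_
      rintro _ ⟨z, rfl⟩
      exact (abs_le.1 (hC (t, z))).2
    have h2 : -C ≤ sInf (Set.range fun z => G (t, z)) := by
      refine le_csInf (Set.range_nonempty _) ?_
      rintro _ ⟨z, rfl⟩
      exact (abs_le.1 (hC (t, z))).1
    have h3 := sInf_le_sSup_slice hC t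
    rw [Real.norm_eq_abs, abs_le]
    constructor <;> linarith
  have := (le_abs_self _).trans h
  simpa using this

lemma hoferNorm_le {n : ℕ} {W : Set (E n)} {G : ℝ × E n → ℝ} {Ψ : ℝ → E n → E n}
    (hG : AdmissibleH n W G) (hΨ : IsHamFlow n G Ψ) : hoferNorm n W (Ψ 1) ≤ HNorm n G := by
  refine csInf_le ⟨0, ?_⟩ ⟨G, Ψ, hG, hΨ, rfl, rfl⟩
  rintro _ ⟨G', _, hG', _, _, rfl⟩
  exact HNorm_nonneg hG'

/-- The derivative of the smooth transition function is supported in `[0, 1]`. -/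
lemma tsupport_deriv_smoothTransition :
    tsupport (deriv Real.smoothTransition) ⊆ Set.Icc 0 1 := by
  refine closure_minimal (fun t ht => ?_) isClosed_Icc
  by_contra hmem
  apply ht
  have hconst : ∃ c : ℝ, Real.smoothTransition =ᶠ[𝓝 t] fun _ => c := by
    rcases lt_or_ge t 0 with h | h
    · refine ⟨0, ?_⟩
      filter_upwards [Iio_mem_nhds h] with s hs
      exact Real.smoothTransition.zero_of_nonpos (le_of_lt hs)
    · have h1 : 1 < t := by
        by_contra h1
        exact hmem ⟨h, not_lt.1 h1⟩
      refine ⟨1, ?_⟩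
      filter_upwards [Ioi_mem_nhds h1] with s hs
      exact Real.smoothTransition.one_of_one_le (le_of_lt hs)
  obtain ⟨c, hc⟩ := hconst
  rw [hc.deriv_eq, deriv_const]

/-- Squeezing a Hamiltonian: `δ sin(K/δ)` has sup norm at most `δ`, while its flow runs along the
orbits of `K` with speed `cos(K/δ)`, which is `1` on `{K = 0}`. Multiplying by
`T β'(t)`, with `β` the smooth transition function, makes the Hamiltonian compactly supported in
`[0, 1] × W` and only reparametrizes time. -/
lemma exists_squeezed (n : ℕ) {W : Set (E n)} {K : E n → ℝ} (hK : ContDiff ℝ (⊤ : ℕ∞) K)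
    (hKc : HasCompactSupport K) (hKW : tsupport K ⊆ W) {φ : ℝ → E n → E n}
    (h0 : ∀ z, φ 0 z = z)
    (hφ : ∀ z t, HasDerivAt (fun s => φ s z) (sharp n (fderiv ℝ K (φ t z))) t)
    (hcons : ∀ z t, K (φ t z) = K z) (T : ℝ) :
    ∃ B : ℝ, ∀ δ > 0, ∃ ψ ∈ HamGrp n W, hoferNorm n W ψ ≤ B * δ ∧
      ∀ z, ψ z = φ (T * Real.cos (K z / δ)) z := by
  set β := Real.smoothTransition with hβ
  have hβs : ContDiff ℝ (⊤ : ℕ∞) β := Real.smoothTransition.contDiff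
  have hβ's : ContDiff ℝ (⊤ : ℕ∞) (deriv β) := by
    have := (contDiff_succ_iff_deriv (n := ((⊤ : ℕ∞) : WithTop ℕ∞)) (f := β)).1
      (by simpa using hβs)
    exact this.2.2
  have hβ'c : HasCompactSupport (deriv β) :=
    isCompact_Icc.of_isClosed_subset (isClosed_tsupport _) tsupport_deriv_smoothTransition
  obtain ⟨b, hb⟩ := hβ'c.exists_bound_of_continuous hβ's.continuous
  refine ⟨2 * (|T| * b), fun δ hδ => ?_⟩
  set G : ℝ × E n → ℝ := fun q => (T * deriv β q.1) * (δ * Real.sin (K q.2 / δ)) with hGdef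
  set Ψ : ℝ → E n → E n := fun t z => φ (T * β t * Real.cos (K z / δ)) z with hΨdef
  have hsupp : tsupport G ⊆ tsupport (deriv β) ×ˢ tsupport K := by
    refine closure_minimal (fun q hq => ?_)
      ((isClosed_tsupport _).prod (isClosed_tsupport _))
    refine ⟨subset_tsupport _ fun h => hq ?_, subset_tsupport _ fun h => hq ?_⟩
    · simp [hGdef, h]
    · simp [hGdef, h]
  have hadm : AdmissibleH n W G := by
    refine ⟨?_, ?_, ?_⟩
    · have h1 : ContDiff ℝ (⊤ : ℕ∞) fun q : ℝ × E n => deriv β q.1 := hβ's.comp contDiff_fst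
      have h2 : ContDiff ℝ (⊤ : ℕ∞) fun q : ℝ × E n => K q.2 := hK.comp contDiff_snd
      exact (contDiff_const.mul h1).mul
        (contDiff_const.mul (Real.contDiff_sin.comp (h2.div_const δ)))
    · exact (hβ'c.isCompact.prod hKc.isCompact).of_isClosed_subset (isClosed_tsupport _) hsupp
    · exact hsupp.trans (Set.prod_mono tsupport_deriv_smoothTransition hKW)
  have hflow : IsHamFlow n G Ψ := by
    refine ⟨fun z => ?_, fun z t => ?_⟩
    · simp [hΨdef, hβ, Real.smoothTransition.zero, h0]
    · have hfd : fderiv ℝ (fun w => G (t, w)) (Ψ t z) =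
          (T * deriv β t * Real.cos (K z / δ)) • fderiv ℝ K (Ψ t z) := by
        have hd : HasFDerivAt K (fderiv ℝ K (Ψ t z)) (Ψ t z) :=
          (hK.differentiable (by simp) _).hasFDerivAt
        have hsin : HasDerivAt (fun x : ℝ => (T * deriv β t) * (δ * Real.sin (x / δ)))
            (T * deriv β t * Real.cos (K (Ψ t z) / δ)) (K (Ψ t z)) := by
          have := ((((hasDerivAt_id (K (Ψ t z))).div_const δ).sin).const_mul δ).const_mul
            (T * deriv β t)
          refine this.congr_deriv ?_
          simp only [id]
          field_simp
        have hcK : K (Ψ t z) = K z := hcons _ _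
        have := hsin.comp_hasFDerivAt _ hd
        rw [hcK] at this
        exact this.fderiv
      rw [XH_eq_sharp, hfd, map_smul]
      have hβd : HasDerivAt β (deriv β t) t := (hβs.differentiable (by simp) t).hasDerivAt
      have htime : HasDerivAt (fun s => T * β s * Real.cos (K z / δ))
          (T * deriv β t * Real.cos (K z / δ)) t := (hβd.const_mul T).mul_const _
      exact (hφ z _).scomp t htime
  refine ⟨Ψ 1, ⟨G, Ψ, hadm, hflow, rfl⟩, (hoferNorm_le hadm hflow).trans ?_, fun z => ?_⟩
  · rw [mul_assoc]
    refine HNorm_le fun q => ?_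
    rw [hGdef]
    simp only [abs_mul, abs_of_pos hδ]
    have hb0 : 0 ≤ b := (norm_nonneg _).trans (hb 0)
    have h1 : |deriv β q.1| ≤ b := hb q.1
    have h2 : |Real.sin (K q.2 / δ)| ≤ 1 := Real.abs_sin_le_one _
    gcongr
    exact mul_le_of_le_one_right hδ.le h2
  · simp [hΨdef, hβ, Real.smoothTransition.one]

/-! ### Local rigidity implies invariance -/

/-- local rigidity forces invariance under Hamiltonian flows of
functions vanishing on `N`. -/
theorem locRigid_flow_invariance
    (n : ℕ) (hn : 1 ≤ n) (N : Set (E n)) (hN : LocallyClosedSet n N)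
    (p : E n) (hp : p ∈ N) (hrig : LocRigid n N p)
    (H : E n → ℝ) (hH : ContDiff ℝ (⊤ : ℕ∞) H) (hHc : HasCompactSupport H)
    (hH0 : ∀ z ∈ N, H z = 0)
    (Φ : ℝ → E n → E n) (hΦ : IsHamFlow n (fun q : ℝ × E n => H q.2) Φ) :
    ∃ ε > (0:ℝ), ∀ t ∈ Set.Icc (0:ℝ) ε, Φ t p ∈ N := by
  obtain ⟨W, hW, hpW, hNW, hR⟩ := hrig
  obtain ⟨hΦ0, hΦd⟩ := hΦ
  obtain ⟨r, hr, hrW⟩ := Metric.isOpen_iff.1 hW p hpW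
  -- `K = χ H` agrees with `H` near `p`, vanishes on `N` and has compact support in `W`.
  let χ : ContDiffBump p := ⟨r / 4, r / 2, by positivity, by linarith⟩
  set K : E n → ℝ := fun z => χ z * H z with hKdef
  have hK : ContDiff ℝ (⊤ : ℕ∞) K := χ.contDiff.mul hH
  have hKc : HasCompactSupport K := χ.hasCompactSupport.mul_right
  have hKW : tsupport K ⊆ W := by
    refine (tsupport_mul_subset_left (f := χ) (g := H)).trans ?_
    rw [χ.tsupport_eq]
    exact (Metric.closedBall_subset_ball (by change r / 2 < r; linarith)).trans hrW
  have hKN : ∀ z ∈ N, K z = 0 := fun z hz => by simp [hKdef, hH0 z hz]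
  have hKH : ∀ z ∈ Metric.ball p (r / 4), fderiv ℝ K z = fderiv ℝ H z := by
    intro z hz
    refine Filter.EventuallyEq.fderiv_eq ?_
    filter_upwards [χ.eventuallyEq_one_of_mem_ball hz] with w hw
    simp [hKdef, hw]
  obtain ⟨C, hC, φ, hφ0, hφd, hφc, hcons⟩ := exists_autonomous_flow n hK hKc
  have hcont : ContinuousAt (fun s => Φ s p) 0 := (hΦd p 0).continuousAt
  obtain ⟨ε, hε, hεball⟩ := Metric.continuousAt_iff.1 hcont (r / 4) (by positivity)
  refine ⟨ε / 2, by positivity, fun T hT => ?_⟩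
  have hball : ∀ s ∈ Set.Icc 0 T, Φ s p ∈ Metric.ball p (r / 4) := by
    intro s hs
    have := hεball (x := s) (by
      rw [Real.dist_eq, sub_zero, abs_of_nonneg hs.1]; linarith [hs.2, hT.2])
    rwa [hΦ0] at this
  have hagree : Φ T p = φ T p :=
    ODE_solution_unique (v := fun _ z => sharp n (fderiv ℝ K z)) (K := C) (fun _ => hC)
      (f := fun s => Φ s p) (g := fun s => φ s p) (a := 0) (b := T)
      (fun t _ => (hΦd p t).continuousAt.continuousWithinAt)
      (fun t ht => by
        have := hΦd p t
        rw [XH_eq_sharp] at this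
        rw [hKH _ (hball t (Set.Ico_subset_Icc_self ht))]
        exact this.hasDerivWithinAt)
      (fun t _ => (hφd p t).continuousAt.continuousWithinAt)
      (fun t _ => (hφd p t).hasDerivWithinAt) (by simp [hφ0, hΦ0]) ⟨hT.1, le_rfl⟩
  by_contra hnot
  have hopen : IsOpen (W \ closure (N ∩ W)) := hW.sdiff isClosed_closure
  have hΦW : Φ T p ∈ W :=
    hrW (Metric.ball_subset_ball (by linarith) (hball T ⟨hT.1, le_rfl⟩))
  have hφmem : φ T p ∈ W \ closure (N ∩ W) := by
    rw [← hagree]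
    exact ⟨hΦW, fun h => hnot (hNW.2 ⟨h, hΦW⟩).1⟩
  have hpre : W ∩ φ T ⁻¹' (W \ closure (N ∩ W)) ∈ 𝓝 p :=
    Filter.inter_mem (hW.mem_nhds hpW)
      ((hφc T hT.1).continuousAt.preimage_mem_nhds (hopen.mem_nhds hφmem))
  obtain ⟨ρ, hρ, hρsub⟩ := Metric.nhds_basis_closedBall.mem_iff.1 hpre
  have hpos := hR (Metric.ball p ρ) Metric.isOpen_ball (Metric.mem_ball_self hρ)
    (fun z hz => (hρsub (Metric.ball_subset_closedBall hz)).1)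
  obtain ⟨B, hB⟩ := exists_squeezed n hK hKc hKW hφ0 hφd hcons T
  -- The squeezed Hamiltonians displace the fixed ball `ball p ρ` with energy at most `B δ`.
  have hle : ∀ δ > 0, dispE n W (Metric.ball p ρ) (N ∩ W) ≤ ENNReal.ofReal (B * δ) := by
    intro δ hδ
    obtain ⟨ψ, hψ, hψn, hψz⟩ := hB δ hδ
    suffices hdisp : ψ '' (closure (Metric.ball p ρ) ∩ W) ∩ (N ∩ W) = ∅ from
      (sInf_le ⟨ψ, hψ, hdisp, rfl⟩ : dispE n W (Metric.ball p ρ) (N ∩ W) ≤ _).trans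
        (ENNReal.ofReal_le_ofReal hψn)
    rw [Set.eq_empty_iff_forall_notMem]
    rintro _ ⟨⟨z, ⟨hz, -⟩, rfl⟩, hzN⟩
    rw [hψz] at hzN
    -- `K` is preserved, so only points of `{K = 0}` can reach `N`; there `ψ` equals `φ T`.
    have hKz : K z = 0 := by rw [← hcons z, hKN _ hzN.1]
    rw [hKz, zero_div, Real.cos_zero, mul_one] at hzN
    exact (hρsub (Metric.closure_ball_subset_closedBall hz)).2.2 (subset_closure hzN)
  have hlim : Filter.Tendsto (fun δ : ℝ => ENNReal.ofReal (B * δ)) (𝓝[>] 0) (𝓝 0) := by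
    have h : Filter.Tendsto (fun δ : ℝ => ENNReal.ofReal (B * δ)) (𝓝 0)
        (𝓝 (ENNReal.ofReal (B * 0))) :=
      (ENNReal.continuous_ofReal.comp (continuous_const.mul continuous_id)).tendsto 0
    rw [mul_zero, ENNReal.ofReal_zero] at h
    exact h.mono_left nhdsWithin_le_nhds
  refine absurd hpos (not_lt.2 (ge_of_tendsto hlim ?_))
  filter_upwards [self_mem_nhdsWithin] with δ hδ
  exact hle δ hδ
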